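/- Let D be a nonempty set of pairs (r,c) of real numbers, and let c_min, c_max, r_max be real constants with 0 < c_min such that for every (r,c) ∈ D we have c_min ≤ c ≤ c_max and r ≤ r_max. Define θ* := sup_{(r,c)∈D} r/c. If a real number θ satisfies sup_{(r,c)∈D} (r − θ·c) = 0, then θ = θ*. -/

import Mathlib

/-- Uniqueness of the Dinkelbach fixed point: if
`sup_{(r,c) ∈ D} (r − θ·c) = 0`, then `θ` equals the optimal ratio
`θ* = sup_{(r,c) ∈ D} r/c`. -/
theorem stmt_1 (D : Set (ℝ × ℝ)) (hD : D.Nonempty)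
    (cmin cmax rmax : ℝ) (hcmin : 0 < cmin)
    (hbounds : ∀ p ∈ D, cmin ≤ p.2 ∧ p.2 ≤ cmax ∧ p.1 ≤ rmax)
    (θ : ℝ)
    (hθ : sSup ((fun p : ℝ × ℝ => p.1 - θ * p.2) '' D) = 0) :
    θ = sSup ((fun q : ℝ × ℝ => q.1 / q.2) '' D) := by
  have hbdd : BddAbove ((fun p : ℝ × ℝ => p.1 - θ * p.2) '' D) := by
    refine ⟨rmax + |θ| * cmax, ?_⟩
    rintro _ ⟨p, hp, rfl⟩
    obtain ⟨hmin, hmax, hr⟩ := hbounds p hp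
    have hneg : -θ * p.2 ≤ |θ| * cmax :=
      mul_le_mul (neg_le_abs θ) hmax (hcmin.le.trans hmin) (abs_nonneg θ)
    dsimp only
    linarith
  symm
  apply csSup_eq_of_forall_le_of_forall_lt_exists_gt (hD.image _)
  · rintro _ ⟨p, hp, rfl⟩
    have hle : p.1 - θ * p.2 ≤ 0 := hθ ▸ le_csSup hbdd ⟨p, hp, rfl⟩
    exact (div_le_iff₀ (hcmin.trans_le (hbounds p hp).1)).2 (by linarith)
  · intro w hw
    have hlt : -((θ - w) * cmin) < sSup ((fun p : ℝ × ℝ => p.1 - θ * p.2) '' D) := by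
      rw [hθ]
      exact neg_neg_of_pos (mul_pos (sub_pos.2 hw) hcmin)
    obtain ⟨_, ⟨p, hp, rfl⟩, hgt⟩ := exists_lt_of_lt_csSup (hD.image _) hlt
    have hmin := (hbounds p hp).1
    have hmul := mul_le_mul_of_nonneg_left hmin (sub_pos.2 hw).le
    dsimp only at hgt
    exact ⟨_, ⟨p, hp, rfl⟩, (lt_div_iff₀ (hcmin.trans_le hmin)).2 (by linarith)⟩
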